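/- arXiv:1704.01817 — 4 statements merged into one kernel-verified Lean document; each statement's English description precedes it below -/
import Mathlib

section
/- Generalized Leibniz formula, first form (Theorem 1.1, formula (Rfg)): Let n ≥ 1 and let 𝐩 ∈ ℝ[x₁,…,xₙ]. Let W(𝐩) be the linear span of all partial derivatives ∂^α𝐩 for multi-indices α ∈ ℕⁿ (including α = 0, i.e. 𝐩 itself), let ρ = dim W(𝐩), and let 𝐩₁,…,𝐩_ρ be a basis of W(𝐩) which is orthonormal with respect to the Fischer inner product. For 1 ≤ j ≤ ρ set 𝐩ⱼ^♭ := 𝐩ⱼ(∂)𝐩 ∈ W(𝐩). Then for all smooth functions f, g : ℝⁿ → ℝ one has 𝐩(∂)(f·g) = Σ_{j=1}^{ρ} (𝐩ⱼ^♭(∂)f)·(𝐩ⱼ(∂)g) pointwise on ℝⁿ. -/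
noncomputable section

open MvPolynomial

/-- Partial derivative of a function on `ℝⁿ` in the `i`-th coordinate direction. -/
def pderivFun {n : ℕ} (i : Fin n) (f : (Fin n → ℝ) → ℝ) : (Fin n → ℝ) → ℝ :=
  fun x => fderiv ℝ f x (Pi.single i 1)

/-- `∂^m`, the iterated partial derivative attached to the multi-index `m`. -/
def multiDerivFun {n : ℕ} (m : Fin n →₀ ℕ) (f : (Fin n → ℝ) → ℝ) : (Fin n → ℝ) → ℝ :=
  List.foldr (fun i g => (pderivFun i)^[m i] g) f (List.finRange n)

/-- `p(∂)`, the constant-coefficient differential operator attached to the polynomial `p`. -/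
def polDeriv {n : ℕ} (p : MvPolynomial (Fin n) ℝ) (f : (Fin n → ℝ) → ℝ) : (Fin n → ℝ) → ℝ :=
  fun x => ∑ m ∈ p.support, p.coeff m * multiDerivFun m f x

/-- `∂^m` acting on polynomials. -/
def polyMultiDeriv {n : ℕ} (m : Fin n →₀ ℕ) (p : MvPolynomial (Fin n) ℝ) :
    MvPolynomial (Fin n) ℝ :=
  List.foldr (fun i q => (fun r => MvPolynomial.pderiv i r)^[m i] q) p (List.finRange n)

/-- `q(∂)p`, as a polynomial. -/
def polyApply {n : ℕ} (q p : MvPolynomial (Fin n) ℝ) : MvPolynomial (Fin n) ℝ :=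
  ∑ m ∈ q.support, q.coeff m • polyMultiDeriv m p

/-- The Fischer inner product `(p,q)_F = (p(∂)q)(0)`. -/
def fischer {n : ℕ} (p q : MvPolynomial (Fin n) ℝ) : ℝ :=
  polDeriv p (fun x => MvPolynomial.eval x q) 0

/-- `W(p)`, the linear span of all partial derivatives `∂^α p` (including `p` itself). -/
def Wspace {n : ℕ} (p : MvPolynomial (Fin n) ℝ) : Submodule ℝ (MvPolynomial (Fin n) ℝ) :=
  Submodule.span ℝ (Set.range fun m : Fin n →₀ ℕ => polyMultiDeriv m p)

/-!
Regard `p(x + y)` as an element `Δp` of `ℝ[x] ⊗ ℝ[y]`. Since the `∂ᵢ` are derivations, `p(∂)(f g)`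
is obtained by applying `(Δp)(∂ ⊗ ∂)` to `f ⊗ g` and multiplying the two factors. Pairing the left
factor of `Δp` with `(q, ·)_F` yields `q(∂)p`. Expanding this in the orthonormal family `b` has
coefficients `(b_j, q(∂)p)_F = (b_j q, p)_F = (q, b_j(∂)p)_F`, and the functionals `(q, ·)_F`
include all coefficient functionals, so `Δp = ∑ j, (b_j(∂)p) ⊗ b_j`.
-/

open scoped TensorProduct

section OperatorCalculus

variable {σ R M N : Type*} [CommSemiring R] [AddCommMonoid M] [Module R M] [AddCommMonoid N]
  [Module R N]

open scoped IsMulCommutative in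
/-- `p(T)` for pairwise commuting operators `T i`, as an algebra homomorphism in `p`. Since
`Module.End R M` is not commutative, it is built by evaluating in the commutative subalgebra
generated by the `T i`. -/
def commutingAeval (T : σ → Module.End R M) (hT : ∀ i j, Commute (T i) (T j)) :
    MvPolynomial σ R →ₐ[R] Module.End R M :=
  haveI : IsMulCommutative (Algebra.adjoin R (Set.range T)) :=
    Algebra.isMulCommutative_adjoin R (by rintro _ ⟨i, rfl⟩ _ ⟨j, rfl⟩; exact hT i j)
  (Algebra.adjoin R (Set.range T)).val.comp
    (aeval fun i => ⟨T i, Algebra.subset_adjoin (Set.mem_range_self i)⟩)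

@[simp]
lemma commutingAeval_X (T : σ → Module.End R M) (hT : ∀ i j, Commute (T i) (T j)) (i : σ) :
    commutingAeval T hT (X i) = T i := by
  simp [commutingAeval]

lemma map_algHom_apply_of_map_X {Φ : MvPolynomial σ R →ₐ[R] Module.End R M}
    {Ψ : MvPolynomial σ R →ₐ[R] Module.End R N} (φ : M →ₗ[R] N)
    (hφ : ∀ i v, φ (Φ (X i) v) = Ψ (X i) (φ v)) (p : MvPolynomial σ R) (v : M) :
    φ (Φ p v) = Ψ p (φ v) := by
  induction p using MvPolynomial.induction_on generalizing v with
  | C a => simp [← algebraMap_eq]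
  | add p q hp hq => simp [hp, hq]
  | mul_X p i hp => simp [hp, hφ]

lemma list_prod_map_pow_apply (T : σ → Module.End R M) (m : σ → ℕ) (l : List σ) (v : M) :
    (l.map fun i => T i ^ m i).prod v = l.foldr (fun i w => (T i)^[m i] w) v := by
  induction l with
  | nil => rfl
  | cons i l ih => simp [ih, Module.End.pow_apply]

lemma algHom_monomial_one_apply {n : ℕ} (Φ : MvPolynomial (Fin n) R →ₐ[R] Module.End R M)
    (m : Fin n →₀ ℕ) (v : M) :
    Φ (monomial m 1) v = (List.finRange n).foldr (fun i w => (Φ (X i))^[m i] w) v := by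
  have hm : monomial m (1 : R) = ((List.finRange n).map fun i => X i ^ m i).prod := by
    rw [monomial_eq, C_1, one_mul, Finsupp.prod_fintype _ _ fun i => pow_zero _, Fin.prod_univ_def]
  simp only [hm, map_list_prod, List.map_map, Function.comp_def, map_pow, list_prod_map_pow_apply]

lemma algHom_apply_eq_sum (Φ : MvPolynomial σ R →ₐ[R] Module.End R M) (p : MvPolynomial σ R)
    (v : M) : Φ p v = ∑ m ∈ p.support, p.coeff m • Φ (monomial m 1) v := by
  conv_lhs => rw [p.as_sum, map_sum, LinearMap.sum_apply]
  refine Finset.sum_congr rfl fun m _ => ?_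
  rw [← LinearMap.smul_apply, ← map_smul, smul_monomial, smul_eq_mul, mul_one]

end OperatorCalculus

section AddComul

variable (σ R : Type*) [CommSemiring R]

/-- The comultiplication of the additive group: `addComul σ R p` is `p(x + y)`, with `R[x, y]`
realised as `R[x] ⊗ R[y]`. -/
def addComul : MvPolynomial σ R →ₐ[R] MvPolynomial σ R ⊗[R] MvPolynomial σ R :=
  aeval fun i => X i ⊗ₜ 1 + 1 ⊗ₜ X i

variable {σ R}

lemma algHom_mul_eq_addComul {A : Type*} [CommSemiring A] [Algebra R A]
    (Φ : MvPolynomial σ R →ₐ[R] Module.End R A)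
    (hΦ : ∀ i f g, Φ (X i) (f * g) = Φ (X i) f * g + f * Φ (X i) g)
    (p : MvPolynomial σ R) (f g : A) :
    Φ p (f * g) = LinearMap.mul' R A
      (Module.endTensorEndAlgHom (S := R) (Algebra.TensorProduct.map Φ Φ (addComul σ R p))
        (f ⊗ₜ g)) := by
  let Ψ : MvPolynomial σ R →ₐ[R] Module.End R (A ⊗[R] A) :=
    (Module.endTensorEndAlgHom (S := R)).comp
      ((Algebra.TensorProduct.map Φ Φ).comp (addComul σ R))
  have hX (i : σ) (t : A ⊗[R] A) :
      LinearMap.mul' R A (Ψ (X i) t) = Φ (X i) (LinearMap.mul' R A t) := by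
    induction t with
    | zero => simp
    | add s t hs ht => simp only [map_add, hs, ht]
    | tmul f g => simp [Ψ, addComul, hΦ, Module.endTensorEndAlgHom_apply]
  exact (map_algHom_apply_of_map_X _ hX p (f ⊗ₜ g)).symm

lemma lid_rTensor_aeval_zero_addComul (p : MvPolynomial σ R) :
    TensorProduct.lid R _ ((aeval (0 : σ → R)).toLinearMap.rTensor _ (addComul σ R p)) = p := by
  let counit : MvPolynomial σ R →ₐ[R] MvPolynomial σ R :=
    (Algebra.TensorProduct.lid R _).toAlgHom.comp
      ((Algebra.TensorProduct.map (aeval (0 : σ → R)) (AlgHom.id R _)).comp (addComul σ R))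
  have hcounit : counit = AlgHom.id R _ := algHom_ext fun i => by simp [counit, addComul]
  exact DFunLike.congr_fun hcounit p

lemma rTensor_derivation_mul {A B : Type*} [CommSemiring A] [Algebra R A] [CommSemiring B]
    [Algebra R B] (D : Derivation R A A) (s t : A ⊗[R] B) :
    D.toLinearMap.rTensor B (s * t) =
      D.toLinearMap.rTensor B s * t + s * D.toLinearMap.rTensor B t := by
  induction s with
  | zero => simp
  | add s₁ s₂ h₁ h₂ => simp only [add_mul, map_add, h₁, h₂]; ring
  | tmul a b =>
    induction t with
    | zero => simp
    | add t₁ t₂ h₁ h₂ => simp only [mul_add, map_add, h₁, h₂]; ring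
    | tmul c d => simp [TensorProduct.add_tmul, add_comm, mul_comm]

lemma addComul_pderiv (i : σ) (p : MvPolynomial σ R) :
    addComul σ R (pderiv i p) = (pderiv i).toLinearMap.rTensor _ (addComul σ R p) := by
  classical
  induction p using MvPolynomial.induction_on with
  | C a => simp [← algebraMap_eq, Algebra.TensorProduct.algebraMap_apply]
  | add p q hp hq => simp only [map_add, hp, hq]
  | mul_X p j hp =>
    have hX : addComul σ R (pderiv i (X j)) =
        (pderiv i).toLinearMap.rTensor _ (addComul σ R (X j)) := by
      by_cases hij : j = i <;> simp [addComul, pderiv_X, hij, Algebra.TensorProduct.one_def]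
    rw [Derivation.leibniz, map_add, smul_eq_mul, smul_eq_mul, map_mul, map_mul, map_mul,
      rTensor_derivation_mul, hX, hp]
    ring

end AddComul

section Fischer

variable {σ R : Type*} [CommSemiring R]

lemma commute_pderiv (i j : σ) :
    Commute (pderiv (R := R) i).toLinearMap (pderiv j).toLinearMap := by
  classical
  refine LinearMap.ext fun p => ?_
  change pderiv i (pderiv j p) = pderiv j (pderiv i p)
  induction p using MvPolynomial.induction_on with
  | C a => simp
  | add p q hp hq => simp only [map_add, hp, hq]
  | mul_X p k hp =>
    have hX (i j : σ) : pderiv i (pderiv j (X k : MvPolynomial σ R)) = 0 := by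
      rw [pderiv_X, Pi.single_apply]
      split_ifs <;> simp
    simp only [Derivation.leibniz, map_add, smul_eq_mul, hX, hp]
    ring

variable (σ R) in
/-- `p(∂)` acting on polynomials. -/
def polyDiffOp : MvPolynomial σ R →ₐ[R] Module.End R (MvPolynomial σ R) :=
  commutingAeval (fun i => (pderiv i).toLinearMap) commute_pderiv

lemma polyDiffOp_X (i : σ) : polyDiffOp σ R (X i) = (pderiv i).toLinearMap :=
  commutingAeval_X _ _ i

lemma addComul_polyDiffOp (p q : MvPolynomial σ R) :
    addComul σ R (polyDiffOp σ R q p) = (polyDiffOp σ R q).rTensor _ (addComul σ R p) := by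
  let Ψ : MvPolynomial σ R →ₐ[R] Module.End R (MvPolynomial σ R ⊗[R] MvPolynomial σ R) :=
    (Module.End.rTensorAlgHom R _ _).comp (polyDiffOp σ R)
  refine map_algHom_apply_of_map_X (Ψ := Ψ) (addComul σ R).toLinearMap (fun i r => ?_) q p
  change addComul σ R (polyDiffOp σ R (X i) r) =
    (polyDiffOp σ R (X i)).rTensor _ (addComul σ R r)
  rw [polyDiffOp_X]
  exact addComul_pderiv i r

variable (σ R) in
/-- The Fischer pairing `(p, q) ↦ (p(∂)q)(0)`, as a bilinear form over any commutative semiring. -/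
def fischerForm : MvPolynomial σ R →ₗ[R] MvPolynomial σ R →ₗ[R] R :=
  (polyDiffOp σ R).toLinearMap.compr₂ (aeval (0 : σ → R)).toLinearMap

lemma fischerForm_apply (p q : MvPolynomial σ R) :
    fischerForm σ R p q = aeval (0 : σ → R) (polyDiffOp σ R p q) :=
  rfl

lemma fischerForm_mul_left (p q r : MvPolynomial σ R) :
    fischerForm σ R (p * q) r = fischerForm σ R p (polyDiffOp σ R q r) := by
  simp only [fischerForm_apply, map_mul, Module.End.mul_apply]

lemma lid_rTensor_fischerForm_addComul (p q : MvPolynomial σ R) :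
    TensorProduct.lid R _ ((fischerForm σ R q).rTensor _ (addComul σ R p)) =
      polyDiffOp σ R q p := by
  rw [← lid_rTensor_aeval_zero_addComul (polyDiffOp σ R q p), addComul_polyDiffOp,
    ← LinearMap.rTensor_comp_apply]
  rfl

lemma sum_fischerForm_smul_of_mem_span {ι : Type*} [Fintype ι] [DecidableEq ι]
    {b : ι → MvPolynomial σ R}
    (hb : ∀ i j, fischerForm σ R (b i) (b j) = if i = j then 1 else 0) {w : MvPolynomial σ R}
    (hw : w ∈ Submodule.span R (Set.range b)) : ∑ j, fischerForm σ R (b j) w • b j = w := by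
  obtain ⟨c, rfl⟩ := (Submodule.mem_span_range_iff_exists_fun R).1 hw
  simp [hb]

variable {K : Type*} [Field K] [CharZero K]

lemma exists_fischerForm_eq_coeff (m : σ →₀ ℕ) :
    ∃ q, ∀ r : MvPolynomial σ K, fischerForm σ K q r = coeff m r := by
  induction m using WellFoundedLT.induction with
  | ind m ih =>
    by_cases hm : m = 0
    · exact ⟨1, fun r => by simp [hm, fischerForm_apply, constantCoeff_eq]⟩
    obtain ⟨i, hi⟩ := DFunLike.ne_iff.1 hm
    obtain ⟨k, rfl⟩ : ∃ k, m = k + Finsupp.single i 1 :=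
      ⟨m - Finsupp.single i 1, (tsub_add_cancel_of_le (Finsupp.single_le_iff.2
        (Nat.one_le_iff_ne_zero.2 hi))).symm⟩
    obtain ⟨q, hq⟩ := ih k (lt_add_of_pos_right k (by simp [pos_iff_ne_zero]))
    have hk : (k i + 1 : K) ≠ 0 := Nat.cast_add_one_ne_zero _
    refine ⟨(k i + 1 : K)⁻¹ • (q * X i), fun r => ?_⟩
    rw [map_smul, LinearMap.smul_apply, fischerForm_mul_left, polyDiffOp_X, hq,
      Derivation.coeFn_coe, coeff_pderiv, smul_eq_mul]
    field_simp

lemma addComul_eq_sum_tmul {ι : Type*} [Fintype ι] [DecidableEq ι]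
    {b : ι → MvPolynomial σ K}
    (hb : ∀ i j, fischerForm σ K (b i) (b j) = if i = j then 1 else 0) {p : MvPolynomial σ K}
    (hp : ∀ q, polyDiffOp σ K q p ∈ Submodule.span K (Set.range b)) :
    addComul σ K p = ∑ j, polyDiffOp σ K (b j) p ⊗ₜ b j := by
  classical
  apply (TensorProduct.equivFinsuppOfBasisLeft (basisMonomials σ K)).injective
  ext1 m
  obtain ⟨q, hq⟩ := exists_fischerForm_eq_coeff (K := K) m
  have hcoord : (basisMonomials σ K).coord m = fischerForm σ K q :=
    LinearMap.ext fun r => (hq r).symm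
  have hswap (j : ι) : fischerForm σ K q (polyDiffOp σ K (b j) p) =
      fischerForm σ K (b j) (polyDiffOp σ K q p) := by
    rw [← fischerForm_mul_left, ← fischerForm_mul_left, mul_comm]
  simp_rw [TensorProduct.equivFinsuppOfBasisLeft_apply, hcoord, lid_rTensor_fischerForm_addComul,
    map_sum, LinearMap.rTensor_tmul, TensorProduct.lid_tmul, hswap]
  exact (sum_fischerForm_smul_of_mem_span hb (hp q)).symm

theorem algHom_mul_eq_sum {A : Type*} [CommSemiring A] [Algebra K A]
    {Φ : MvPolynomial σ K →ₐ[K] Module.End K A}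
    (hΦ : ∀ i f g, Φ (X i) (f * g) = Φ (X i) f * g + f * Φ (X i) g)
    {ι : Type*} [Fintype ι] [DecidableEq ι] {b : ι → MvPolynomial σ K}
    (hb : ∀ i j, fischerForm σ K (b i) (b j) = if i = j then 1 else 0) {p : MvPolynomial σ K}
    (hp : ∀ q, polyDiffOp σ K q p ∈ Submodule.span K (Set.range b)) (f g : A) :
    Φ p (f * g) = ∑ j, Φ (polyDiffOp σ K (b j) p) f * Φ (b j) g := by
  rw [algHom_mul_eq_addComul Φ hΦ, addComul_eq_sum_tmul hb hp]
  simp [Module.endTensorEndAlgHom_apply]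

end Fischer

section SmoothFunctions

variable (E : Type*) [NormedAddCommGroup E] [NormedSpace ℝ E]

/-- The algebra of smooth real-valued functions on a normed space, as a subalgebra of the algebra
of all functions. -/
def smoothSubalgebra : Subalgebra ℝ (E → ℝ) where
  carrier := {f | ContDiff ℝ (⊤ : ℕ∞) f}
  mul_mem' {f g} (hf : ContDiff ℝ (⊤ : ℕ∞) f) (hg : ContDiff ℝ (⊤ : ℕ∞) g) := hf.mul hg
  add_mem' {f g} (hf : ContDiff ℝ (⊤ : ℕ∞) f) (hg : ContDiff ℝ (⊤ : ℕ∞) g) := hf.add hg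
  algebraMap_mem' c := show ContDiff ℝ (⊤ : ℕ∞) fun _ : E => c from contDiff_const

variable {E}

lemma mem_smoothSubalgebra {f : E → ℝ} : f ∈ smoothSubalgebra E ↔ ContDiff ℝ (⊤ : ℕ∞) f :=
  Iff.rfl

lemma contDiff_coe (f : smoothSubalgebra E) : ContDiff ℝ (⊤ : ℕ∞) (f : E → ℝ) :=
  f.2

lemma differentiable_coe (f : smoothSubalgebra E) : Differentiable ℝ (f : E → ℝ) :=
  (contDiff_coe f).differentiable (by simp)

lemma contDiff_fderiv_coe (f : smoothSubalgebra E) :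
    ContDiff ℝ (⊤ : ℕ∞) (fderiv ℝ (f : E → ℝ)) :=
  (contDiff_coe f).fderiv_right (by simp)

/-- The directional derivative along a fixed vector, as a derivation of the algebra of smooth
functions. -/
def dirDeriv (v : E) : Derivation ℝ (smoothSubalgebra E) (smoothSubalgebra E) :=
  Derivation.mk'
    { toFun := fun f =>
        ⟨fun x => fderiv ℝ (f : E → ℝ) x v,
          mem_smoothSubalgebra.2 ((contDiff_fderiv_coe f).clm_apply (contDiff_const (c := v)))⟩
      map_add' := fun f g => Subtype.ext <| funext fun x => by
        simp [fderiv_add (differentiable_coe f x) (differentiable_coe g x)]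
      map_smul' := fun c f => Subtype.ext <| funext fun x => by
        simp [fderiv_const_smul (differentiable_coe f x)] }
    fun f g => Subtype.ext <| funext fun x => by
      simp [fderiv_mul (differentiable_coe f x) (differentiable_coe g x)]

lemma dirDeriv_apply (v : E) (f : smoothSubalgebra E) (x : E) :
    (dirDeriv v f : E → ℝ) x = fderiv ℝ (f : E → ℝ) x v :=
  rfl

lemma dirDeriv_dirDeriv_apply (v w : E) (f : smoothSubalgebra E) (x : E) :
    (dirDeriv v (dirDeriv w f) : E → ℝ) x = fderiv ℝ (fderiv ℝ (f : E → ℝ)) x v w := by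
  have hdf : DifferentiableAt ℝ (fderiv ℝ (f : E → ℝ)) x :=
    (contDiff_fderiv_coe f).differentiable (by simp) x
  change fderiv ℝ (fun y => fderiv ℝ (f : E → ℝ) y w) x v = _
  simp [fderiv_clm_apply hdf (differentiableAt_const w)]

lemma commute_dirDeriv (v w : E) :
    Commute (dirDeriv v).toLinearMap (dirDeriv w).toLinearMap := by
  refine LinearMap.ext fun f => Subtype.ext <| funext fun x => ?_
  have hsymm : IsSymmSndFDerivAt ℝ (f : E → ℝ) x :=
    (contDiff_coe f).contDiffAt.isSymmSndFDerivAt (by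
      rw [minSmoothness_of_isRCLikeNormedField]; exact WithTop.coe_le_coe.2 le_top)
  exact (dirDeriv_dirDeriv_apply v w f x).trans
    ((hsymm v w).trans (dirDeriv_dirDeriv_apply w v f x).symm)

end SmoothFunctions

section Coordinates

variable {n : ℕ}

variable (n) in
/-- `p(∂)` acting on the smooth functions `ℝⁿ → ℝ`. -/
def smoothDiffOp : MvPolynomial (Fin n) ℝ →ₐ[ℝ] Module.End ℝ (smoothSubalgebra (Fin n → ℝ)) :=
  commutingAeval (fun i => (dirDeriv (Pi.single i 1)).toLinearMap) fun _ _ => commute_dirDeriv _ _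

lemma smoothDiffOp_X (i : Fin n) :
    smoothDiffOp n (X i) = (dirDeriv (Pi.single i 1)).toLinearMap :=
  commutingAeval_X _ _ i

variable (n) in
/-- The polynomial functions, as a homomorphism into the algebra of smooth functions. -/
def smoothEval : MvPolynomial (Fin n) ℝ →ₐ[ℝ] smoothSubalgebra (Fin n → ℝ) :=
  aeval fun i => ⟨fun x => x i, mem_smoothSubalgebra.2 (contDiff_apply ℝ ℝ i)⟩

lemma smoothEval_X_apply (i : Fin n) (x : Fin n → ℝ) :
    (smoothEval n (X i) : (Fin n → ℝ) → ℝ) x = x i := by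
  simp [smoothEval]

lemma smoothEval_apply (p : MvPolynomial (Fin n) ℝ) (x : Fin n → ℝ) :
    (smoothEval n p : (Fin n → ℝ) → ℝ) x = eval x p := by
  induction p using MvPolynomial.induction_on with
  | C a => simp [← algebraMap_eq]
  | add p q hp hq => simp [hp, hq]
  | mul_X p i hp => simp [hp, smoothEval_X_apply]

lemma smoothEval_pderiv (i : Fin n) (p : MvPolynomial (Fin n) ℝ) :
    smoothEval n (pderiv i p) = dirDeriv (Pi.single i 1) (smoothEval n p) := by
  induction p using MvPolynomial.induction_on with
  | C a => simp [← algebraMap_eq]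
  | add p q hp hq => simp only [map_add, hp, hq]
  | mul_X p j hp =>
    have hX : smoothEval n (pderiv i (X j)) = dirDeriv (Pi.single i 1) (smoothEval n (X j)) := by
      refine Subtype.ext <| funext fun x => ?_
      have hj : (smoothEval n (X j) : (Fin n → ℝ) → ℝ) =
          ContinuousLinearMap.proj (R := ℝ) (φ := fun _ : Fin n => ℝ) j :=
        funext (smoothEval_X_apply j)
      rw [dirDeriv_apply, hj, ContinuousLinearMap.fderiv, smoothEval_apply, pderiv_X]
      by_cases hij : j = i <;> simp [hij]
    simp only [Derivation.leibniz, map_add, smul_eq_mul, map_mul, hX, hp]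

lemma smoothEval_polyDiffOp (p q : MvPolynomial (Fin n) ℝ) :
    smoothEval n (polyDiffOp (Fin n) ℝ p q) = smoothDiffOp n p (smoothEval n q) :=
  map_algHom_apply_of_map_X (smoothEval n).toLinearMap
    (fun i r => by simpa [polyDiffOp_X, smoothDiffOp_X] using smoothEval_pderiv i r) p q

lemma multiDerivFun_coe (m : Fin n →₀ ℕ) (f : smoothSubalgebra (Fin n → ℝ)) :
    multiDerivFun m f = smoothDiffOp n (monomial m 1) f := by
  rw [algHom_monomial_one_apply]
  refine List.foldr_hom Subtype.val fun i g => ?_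
  have hi : Function.Semiconj Subtype.val (smoothDiffOp n (X i)) (pderivFun i) := fun g => by
    rw [smoothDiffOp_X]
    rfl
  exact (hi.iterate_right (m i) g).symm

lemma polDeriv_coe (p : MvPolynomial (Fin n) ℝ) (f : smoothSubalgebra (Fin n → ℝ))
    (x : Fin n → ℝ) :
    polDeriv p f x = (smoothDiffOp n p f : (Fin n → ℝ) → ℝ) x := by
  rw [algHom_apply_eq_sum]
  simp [polDeriv, multiDerivFun_coe]

lemma polyMultiDeriv_eq_polyDiffOp (m : Fin n →₀ ℕ) (p : MvPolynomial (Fin n) ℝ) :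
    polyMultiDeriv m p = polyDiffOp (Fin n) ℝ (monomial m 1) p := by
  simp only [algHom_monomial_one_apply, polyDiffOp_X]
  rfl

lemma polyApply_eq_polyDiffOp (q p : MvPolynomial (Fin n) ℝ) :
    polyApply q p = polyDiffOp (Fin n) ℝ q p := by
  simp only [algHom_apply_eq_sum _ q, polyApply, polyMultiDeriv_eq_polyDiffOp]

lemma polyApply_mem_Wspace (q p : MvPolynomial (Fin n) ℝ) : polyApply q p ∈ Wspace p :=
  Submodule.sum_mem _ fun m _ => Submodule.smul_mem _ _ (Submodule.subset_span ⟨m, rfl⟩)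

lemma fischer_eq_fischerForm (p q : MvPolynomial (Fin n) ℝ) :
    fischer p q = fischerForm (Fin n) ℝ p q := by
  have hq : (fun x => eval x q) = (smoothEval n q : (Fin n → ℝ) → ℝ) :=
    funext fun x => (smoothEval_apply q x).symm
  rw [fischer, hq, polDeriv_coe, ← smoothEval_polyDiffOp, smoothEval_apply, fischerForm_apply,
    aeval_eq_eval]

end Coordinates

theorem generalized_leibniz_first_form_general {n : ℕ} (p : MvPolynomial (Fin n) ℝ) {ι : Type*}
    [Fintype ι] [DecidableEq ι] (b : ι → MvPolynomial (Fin n) ℝ)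
    (hbspan : Wspace p ≤ Submodule.span ℝ (Set.range b))
    (hborth : ∀ i j, fischer (b i) (b j) = if i = j then 1 else 0)
    (f g : (Fin n → ℝ) → ℝ) (hf : ContDiff ℝ (⊤ : ℕ∞) f) (hg : ContDiff ℝ (⊤ : ℕ∞) g)
    (x : Fin n → ℝ) :
    polDeriv p (fun y => f y * g y) x =
      ∑ j, polDeriv (polyApply (b j) p) f x * polDeriv (b j) g x := by
  lift f to smoothSubalgebra (Fin n → ℝ) using hf
  lift g to smoothSubalgebra (Fin n → ℝ) using hg
  have hmul (i : Fin n) (u v : smoothSubalgebra (Fin n → ℝ)) :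
      smoothDiffOp n (X i) (u * v) =
        smoothDiffOp n (X i) u * v + u * smoothDiffOp n (X i) v := by
    simp [smoothDiffOp_X, add_comm, mul_comm]
  have horth : ∀ i j, fischerForm (Fin n) ℝ (b i) (b j) = if i = j then 1 else 0 := by
    simpa only [fischer_eq_fischerForm] using hborth
  have hspan (q : MvPolynomial (Fin n) ℝ) :
      polyDiffOp (Fin n) ℝ q p ∈ Submodule.span ℝ (Set.range b) :=
    hbspan (polyApply_eq_polyDiffOp q p ▸ polyApply_mem_Wspace q p)
  have hprod : smoothDiffOp n p (f * g) = _ := algHom_mul_eq_sum hmul horth hspan f g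
  calc polDeriv p (fun y => f.1 y * g.1 y) x
    _ = (smoothDiffOp n p (f * g)).1 x := polDeriv_coe p (f * g) x
    _ = ∑ j, polDeriv (polyApply (b j) p) f.1 x * polDeriv (b j) g.1 x := by
      simp [hprod, polDeriv_coe, polyApply_eq_polyDiffOp]

/-- Generalized Leibniz formula, first form. -/
theorem generalized_leibniz_first_form
    (n : ℕ) (hn : 1 ≤ n) (p : MvPolynomial (Fin n) ℝ)
    (ρ : ℕ) (hρ : ρ = Module.finrank ℝ (Wspace p))
    (b : Fin ρ → MvPolynomial (Fin n) ℝ)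
    (hbmem : ∀ j, b j ∈ Wspace p)
    (hbspan : Wspace p ≤ Submodule.span ℝ (Set.range b))
    (hborth : ∀ i j, fischer (b i) (b j) = if i = j then 1 else 0)
    (f g : (Fin n → ℝ) → ℝ) (hf : ContDiff ℝ (⊤ : ℕ∞) f) (hg : ContDiff ℝ (⊤ : ℕ∞) g)
    (x : Fin n → ℝ) :
    polDeriv p (fun y => f y * g y) x
      = ∑ j : Fin ρ, polDeriv (polyApply (b j) p) f x * polDeriv (b j) g x :=
  generalized_leibniz_first_form_general p b hbspan hborth f g hf hg x
end
end

section
/- Bernstein identity for the split Jordan algebra V = Mat(m,ℝ) (the case V = Mat(m,ℝ) of Proposition 2.5, a signed Cayley identity): Let m ≥ 1, s ∈ ℂ, and let ε ∈ {+,−}. On the open set of m×m real matrices X with det X ≠ 0, one has det(∂)[ (det X)^{s,ε} ] = s(s+1)⋯(s+m−1) · (det X)^{s−1,−ε}, where (det X)^{s,ε} denotes the signed power of det X. -/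
noncomputable section

/-- Signed power `t^{s,ε}`: `t^{s,+} = |t|^s = exp(s·log|t|)` and `t^{s,−} = sign(t)·|t|^s`. -/
def sPow (ε : Bool) (s : ℂ) (t : ℝ) : ℂ :=
  (if ε then 1 else (Real.sign t : ℂ)) * Complex.exp (s * (Real.log |t| : ℂ))

/-- Partial derivative of a function of an `m×m` real matrix variable in the entry `(i,j)`. -/
def matPd {m : ℕ} (i j : Fin m) (f : (Fin m → Fin m → ℝ) → ℂ) : (Fin m → Fin m → ℝ) → ℂ :=
  fun X => fderiv ℝ f X (Pi.single i (Pi.single j 1))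

/-- The operator `det(∂) = Σ_{σ∈S_m} sgn(σ) ∂^m/(∂X_{1σ(1)}⋯∂X_{mσ(m)})`. -/
def detDeriv {m : ℕ} (f : (Fin m → Fin m → ℝ) → ℂ) : (Fin m → Fin m → ℝ) → ℂ :=
  fun X => ∑ σ : Equiv.Perm (Fin m),
    ((Equiv.Perm.sign σ : ℤ) : ℂ) *
      (List.foldr (fun i g => matPd i (σ i) g) f (List.finRange m)) X

/-!
Let `C = (X⁻¹)ᵀ` be the gradient of `log |det X|`, so that
`∂_{ij} (det X)^{s,ε} = s C_{ij} (det X)^{s,ε}` and `∂_{ij} C_{ab} = -C_{aj} C_{ib}`. Then every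
`k × k` minor of `∂` acts on the power by `s (s + 1) ⋯ (s + k - 1)` times the corresponding minor
of `C`, by induction on `k`: expand the minor of `∂` along its first row. By the product rule, the
derivative of the power gives `s` times the minor of `C`, while the derivative of each of the `k`
remaining rows gives minus the expansion of that minor with this row and the first one exchanged,
hence one more copy of it. For `k = m` the minor of `C` is `(det X)⁻¹`.
-/

open Equiv Filter Matrix
open scoped ContDiff Topology

section Perm

variable {R : Type*} [CommRing R] {k : ℕ}

lemma sum_sign_mul_perm_succ (F : Fin (k + 1) → (Fin k → Fin (k + 1)) → R) :
    ∑ σ : Perm (Fin (k + 1)), ((Perm.sign σ : ℤ) : R) * F (σ 0) (fun i => σ i.succ) =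
      ∑ p, ((Perm.sign (swap 0 p) : ℤ) : R) *
        ∑ τ : Perm (Fin k), ((Perm.sign τ : ℤ) : R) * F p (fun i => swap 0 p (τ i).succ) := by
  -- `decomposeFin` writes `σ` as `swap 0 (σ 0)` after a permutation of the nonzero indices.
  rw [← Perm.decomposeFin.symm.sum_comp, Fintype.sum_prod_type]
  refine Finset.sum_congr rfl fun p _ => ?_
  rw [Finset.mul_sum]
  refine Finset.sum_congr rfl fun τ _ => ?_
  rw [Perm.decomposeFin.symm_sign, Perm.sign_swap', Perm.decomposeFin_symm_apply_zero]
  simp only [Perm.decomposeFin_symm_apply_succ, eq_comm (a := (0 : Fin (k + 1))), Units.val_mul,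
    Int.cast_mul, mul_assoc]

lemma det_eq_sum_swap_row_zero (A : Matrix (Fin (k + 1)) (Fin (k + 1)) R) :
    A.det = ∑ p, ((Perm.sign (swap 0 p) : ℤ) : R) *
      (A 0 p * (A.submatrix Fin.succ (swap 0 p ∘ Fin.succ)).det) := by
  have h := sum_sign_mul_perm_succ fun p q => A 0 p * ∏ i, A i.succ (q i)
  simp_rw [← Fin.prod_univ_succ fun i => A i _] at h
  rw [← A.det_transpose, det_apply']
  refine h.trans (Finset.sum_congr rfl fun p _ => ?_)
  rw [← det_transpose (A.submatrix _ _), det_apply', Finset.mul_sum (a := A 0 p)]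
  simp [mul_left_comm (A 0 p)]

/- This is the expansion along the first row of `A` with its rows `0` and `b + 1` exchanged. -/
lemma sum_swap_mul_det_updateRow (A : Matrix (Fin (k + 1)) (Fin (k + 1)) R) (b : Fin k) :
    ∑ p, ((Perm.sign (swap 0 p) : ℤ) : R) *
      (A b.succ p * ((A.submatrix Fin.succ (swap 0 p ∘ Fin.succ)).updateRow b
        fun c => A 0 (swap 0 p c.succ)).det) = -A.det := by
  have hminor p : (A.submatrix (swap 0 b.succ) id).submatrix Fin.succ (swap 0 p ∘ Fin.succ) =
      (A.submatrix Fin.succ (swap 0 p ∘ Fin.succ)).updateRow b fun c => A 0 (swap 0 p c.succ) := by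
    ext a c
    rcases eq_or_ne a b with rfl | hab
    · simp
    · simp [hab, swap_apply_of_ne_of_ne (Fin.succ_ne_zero a) (Fin.succ_injective _ |>.ne hab)]
  have h := det_eq_sum_swap_row_zero (A.submatrix (swap 0 b.succ) id)
  simp only [det_permute, Perm.sign_swap (Fin.succ_ne_zero b).symm, hminor] at h
  simpa using h.symm

lemma sum_swap_mul_sub_sum_det_updateRow {S : Type*} [CommRing S] (φ : R →+* S) (s : S)
    (A : Matrix (Fin (k + 1)) (Fin (k + 1)) R) :
    ∑ p, ((Perm.sign (swap 0 p) : ℤ) : S) *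
      (s * φ (A 0 p) * φ (A.submatrix Fin.succ (swap 0 p ∘ Fin.succ)).det -
        φ (∑ b : Fin k, A b.succ p * ((A.submatrix Fin.succ (swap 0 p ∘ Fin.succ)).updateRow b
          fun c => A 0 (swap 0 p c.succ)).det)) = (s + k) * φ A.det := by
  have hfirst : ∑ p, ((Perm.sign (swap 0 p) : ℤ) : S) *
      (s * φ (A 0 p) * φ (A.submatrix Fin.succ (swap 0 p ∘ Fin.succ)).det) = s * φ A.det := by
    rw [det_eq_sum_swap_row_zero A]
    simp only [map_sum, map_mul, map_intCast, Finset.mul_sum, mul_assoc, mul_left_comm s]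
  have hothers : ∑ p, ((Perm.sign (swap 0 p) : ℤ) : S) *
      φ (∑ b : Fin k, A b.succ p * ((A.submatrix Fin.succ (swap 0 p ∘ Fin.succ)).updateRow b
        fun c => A 0 (swap 0 p c.succ)).det) = -(k * φ A.det) := by
    simp only [← map_intCast φ, ← map_mul, ← map_sum, Finset.mul_sum]
    rw [Finset.sum_comm, Finset.sum_congr rfl fun b _ => sum_swap_mul_det_updateRow A b]
    simp
  simp only [mul_sub, Finset.sum_sub_distrib]
  rw [hfirst, hothers]
  ring

end Perm

section MatrixCalculus

variable {𝕜 n : Type*} [NontriviallyNormedField 𝕜] [Fintype n] [DecidableEq n]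

variable (𝕜 n) in
/-- The determinant as a continuous multilinear function of the rows. -/
def continuousMultilinearDet : ContinuousMultilinearMap 𝕜 (fun _ : n => n → 𝕜) 𝕜 where
  toMultilinearMap := (detRowAlternating : (n → 𝕜) [⋀^n]→ₗ[𝕜] 𝕜).toMultilinearMap
  cont := (continuous_id (X := Matrix n n 𝕜)).matrix_det

lemma contDiff_det {N : WithTop ℕ∞} : ContDiff 𝕜 N fun Y : n → n → 𝕜 => (of Y).det :=
  (continuousMultilinearDet 𝕜 n).contDiff

lemma hasFDerivAt_det (X : n → n → 𝕜) :
    HasFDerivAt (fun Y : n → n → 𝕜 => (of Y).det)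
      ((continuousMultilinearDet 𝕜 n).linearDeriv X) X :=
  (continuousMultilinearDet 𝕜 n).hasFDerivAt X

section

variable {E : Type*} [NormedAddCommGroup E] [NormedSpace 𝕜 E] {A : E → n → n → 𝕜} {X : E}

lemma fderiv_det_apply (hA : ∀ i j, DifferentiableAt 𝕜 (fun Y => A Y i j) X) (H : E) :
    fderiv 𝕜 (fun Y => (of (A Y)).det) X H =
      ∑ i, ((of (A X)).updateRow i fun j => fderiv 𝕜 (fun Y => A Y i j) X H).det := by
  have hA' : DifferentiableAt 𝕜 A X :=
    differentiableAt_pi.2 fun i => differentiableAt_pi.2 (hA i)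
  have h := (hasFDerivAt_det (A X)).comp X hA'.hasFDerivAt
  refine (DFunLike.congr_fun h.fderiv H).trans ?_
  rw [ContinuousLinearMap.comp_apply, ContinuousMultilinearMap.linearDeriv_apply]
  simp_rw [fun i j => fderiv_apply (differentiableAt_pi.1 hA' i) j, fderiv_apply hA']
  rfl

end

lemma fderiv_det_single (X : n → n → 𝕜) (i j : n) :
    fderiv 𝕜 (fun Y : n → n → 𝕜 => (of Y).det) X (Pi.single i (Pi.single j 1)) =
      (of X).adjugate j i := by
  rw [(hasFDerivAt_det X).fderiv, ContinuousMultilinearMap.linearDeriv_apply,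
    Finset.sum_eq_single_of_mem i (Finset.mem_univ i), adjugate_apply]
  · simp only [Pi.single_eq_same]; rfl
  · intro a _ hai
    rw [Pi.single_eq_of_ne hai]
    exact (continuousMultilinearDet 𝕜 n).map_update_zero X a

section Inverse

variable {X : n → n → 𝕜}

lemma contDiff_adjugate_apply {N : WithTop ℕ∞} (a b : n) :
    ContDiff 𝕜 N fun Y : n → n → 𝕜 => (of Y).adjugate a b := by
  simp only [adjugate_apply]
  refine (continuousMultilinearDet 𝕜 n).contDiff.comp
    (f := fun Y => Function.update Y b (Pi.single a 1)) (contDiff_pi.2 fun i => ?_)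
  simp only [Function.update_apply]
  split_ifs <;> fun_prop

lemma contDiffAt_inv_apply {N : WithTop ℕ∞} (hX : (of X).det ≠ 0) (a b : n) :
    ContDiffAt 𝕜 N (fun Y : n → n → 𝕜 => (of Y)⁻¹ a b) X := by
  simp only [Matrix.inv_def, Matrix.smul_apply, Ring.inverse_eq_inv', smul_eq_mul]
  have hdet : ContDiffAt 𝕜 N (fun Y : n → n → 𝕜 => (of Y).det) X := contDiff_det.contDiffAt
  exact (hdet.inv hX).mul (contDiff_adjugate_apply a b).contDiffAt

lemma eventually_det_ne_zero (hX : (of X).det ≠ 0) : ∀ᶠ Y in 𝓝 X, (of Y).det ≠ 0 :=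
  (contDiff_det (N := 0)).continuous.continuousAt.eventually_ne hX

/- Differentiate `Y⁻¹ * Y = 1`, which holds near `X`. -/
lemma fderiv_inv_apply (hX : (of X).det ≠ 0) (a b : n) (H : n → n → 𝕜) :
    fderiv 𝕜 (fun Y : n → n → 𝕜 => (of Y)⁻¹ a b) X H =
      -(((of X)⁻¹ * of H * (of X)⁻¹) a b) := by
  let D : Matrix n n 𝕜 := of fun a b => fderiv 𝕜 (fun Y : n → n → 𝕜 => (of Y)⁻¹ a b) X H
  suffices hD : D * of X = -((of X)⁻¹ * of H) by
    have := congr_arg (· * (of X)⁻¹) hD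
    simp only [Matrix.mul_assoc, mul_nonsing_inv _ hX.isUnit, Matrix.mul_one, Matrix.neg_mul]
      at this
    simpa [D, Matrix.mul_assoc] using congr_fun₂ this a b
  ext a b
  have hconst : HasFDerivAt (fun Y : n → n → 𝕜 => ∑ l, (of Y)⁻¹ a l * Y l b)
      (0 : (n → n → 𝕜) →L[𝕜] 𝕜) X := by
    refine (hasFDerivAt_const ((1 : Matrix n n 𝕜) a b) X).congr_of_eventuallyEq ?_
    filter_upwards [eventually_det_ne_zero hX] with Y hY
    exact congr_fun₂ (nonsing_inv_mul _ hY.isUnit) a b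
  have hinv l : DifferentiableAt 𝕜 (fun Y : n → n → 𝕜 => (of Y)⁻¹ a l) X :=
    (contDiffAt_inv_apply hX a l).differentiableAt one_ne_zero
  let coord l : (n → n → 𝕜) →L[𝕜] 𝕜 :=
    (ContinuousLinearMap.proj b : (n → 𝕜) →L[𝕜] 𝕜) ∘L ContinuousLinearMap.proj l
  have hsum := HasFDerivAt.fun_sum (u := Finset.univ) fun l _ =>
    (hinv l).hasFDerivAt.mul (coord l).hasFDerivAt
  have hzero := DFunLike.congr_fun (hsum.unique hconst) H
  simp only [_root_.sum_apply, _root_.add_apply, _root_.smul_apply, smul_eq_mul,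
    Finset.sum_add_distrib] at hzero
  rw [Matrix.neg_apply, eq_neg_iff_add_eq_zero, add_comm]
  simpa [D, coord, Matrix.mul_apply, mul_comm] using hzero

end Inverse

end MatrixCalculus

section SignedPower

variable (ε : Bool) (s : ℂ) {t : ℝ}

lemma sPow_eventuallyEq (ht : t ≠ 0) :
    sPow ε s =ᶠ[𝓝 t] fun u => (if ε then 1 else (t.sign : ℂ)) * Complex.exp (s * Real.log u) := by
  have hsign : ∀ᶠ u in 𝓝 t, u.sign = t.sign := by
    rcases ht.lt_or_gt with h | h
    · filter_upwards [eventually_lt_nhds h] with u hu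
      rw [Real.sign_of_neg hu, Real.sign_of_neg h]
    · filter_upwards [eventually_gt_nhds h] with u hu
      rw [Real.sign_of_pos hu, Real.sign_of_pos h]
  filter_upwards [hsign] with u hu
  rw [sPow, hu, Real.log_abs]

lemma contDiffAt_sPow {N : WithTop ℕ∞} (ht : t ≠ 0) : ContDiffAt ℝ N (sPow ε s) t := by
  refine ContDiffAt.congr_of_eventuallyEq ?_ (sPow_eventuallyEq ε s ht)
  exact contDiffAt_const.mul (contDiffAt_const.mul
    (Complex.ofRealCLM.contDiff.contDiffAt.comp t (Real.contDiffAt_log.2 ht))).cexp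

lemma mul_sPow_not_sub_one (ht : t ≠ 0) : t * sPow (!ε) (s - 1) t = sPow ε s t := by
  have hexp : Complex.exp (s * Real.log |t|) = |t| * Complex.exp ((s - 1) * Real.log |t|) := by
    rw [sub_mul, one_mul, Complex.exp_sub, ← Complex.ofReal_exp (Real.log |t|),
      Real.exp_log (abs_pos.2 ht), mul_div_cancel₀]
    exact Complex.ofReal_ne_zero.2 (abs_ne_zero.2 ht)
  rw [sPow, sPow, hexp]
  rcases ht.lt_or_gt with h | h <;>
    cases ε <;> simp [Real.sign_of_neg, Real.sign_of_pos, abs_of_neg, abs_of_pos, h]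

lemma hasDerivAt_sPow (ht : t ≠ 0) :
    HasDerivAt (sPow ε s) (s * sPow (!ε) (s - 1) t) t := by
  have h := ((((Real.hasDerivAt_log ht).ofReal_comp).const_mul s).cexp).const_mul
    (if ε then 1 else (t.sign : ℂ))
  have ht' : (t : ℂ) ≠ 0 := Complex.ofReal_ne_zero.2 ht
  have hval : s * sPow (!ε) (s - 1) t =
      (if ε then 1 else (t.sign : ℂ)) * (Complex.exp (s * Real.log t) * (s * (t⁻¹ : ℝ))) := by
    rw [← mul_left_inj' ht', mul_assoc, mul_comm _ (t : ℂ), mul_sPow_not_sub_one ε s ht, sPow,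
      Real.log_abs]
    push_cast
    field_simp
  rw [hval]
  exact h.congr_of_eventuallyEq (sPow_eventuallyEq ε s ht)

end SignedPower

lemma differentiableAt_ofReal_comp {E : Type*} [NormedAddCommGroup E] [NormedSpace ℝ E] {h : E → ℝ}
    {x : E} (hh : DifferentiableAt ℝ h x) : DifferentiableAt ℝ (fun y => (h y : ℂ)) x :=
  Complex.ofRealCLM.differentiableAt.comp x hh

section MinorDeriv

variable {m k : ℕ} {f g : (Fin m → Fin m → ℝ) → ℂ} {X : Fin m → Fin m → ℝ}

lemma matPd_congr (h : f =ᶠ[𝓝 X] g) (i j : Fin m) : matPd i j f X = matPd i j g X := by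
  rw [matPd, matPd, h.fderiv_eq]

lemma matPd_const_mul (hf : DifferentiableAt ℝ f X) (c : ℂ) (i j : Fin m) :
    matPd i j (fun Y => c * f Y) X = c * matPd i j f X := by
  simp [matPd, fderiv_const_mul hf]

lemma matPd_mul (hf : DifferentiableAt ℝ f X) (hg : DifferentiableAt ℝ g X) (i j : Fin m) :
    matPd i j (fun Y => f Y * g Y) X = f X * matPd i j g X + matPd i j f X * g X := by
  simp [matPd, fderiv_fun_mul hf hg, mul_comm]

lemma matPd_ofReal_comp {h : (Fin m → Fin m → ℝ) → ℝ} (hh : DifferentiableAt ℝ h X) (i j : Fin m) :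
    matPd i j (fun Y => (h Y : ℂ)) X = (fderiv ℝ h X (Pi.single i (Pi.single j 1)) : ℝ) :=
  DFunLike.congr_fun (Complex.ofRealCLM.hasFDerivAt.comp X hh.hasFDerivAt).fderiv _

lemma matPd_sum_mul {ι : Type*} {u : Finset ι} {c : ι → ℂ} {F : ι → (Fin m → Fin m → ℝ) → ℂ}
    (hF : ∀ a ∈ u, DifferentiableAt ℝ (F a) X) (i j : Fin m) :
    matPd i j (fun Y => ∑ a ∈ u, c a * F a Y) X = ∑ a ∈ u, c a * matPd i j (F a) X := by
  simp only [matPd]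
  rw [fderiv_fun_sum fun a ha => (hF a ha).const_mul (c a), _root_.sum_apply]
  exact Finset.sum_congr rfl fun a ha => by simp [fderiv_const_mul (hF a ha)]

lemma contDiffAt_matPd (hf : ContDiffAt ℝ ∞ f X) (i j : Fin m) :
    ContDiffAt ℝ ∞ (matPd i j f) X :=
  (hf.fderiv_right (by simp)).clm_apply contDiffAt_const

lemma contDiffAt_foldr_matPd {ι : Type*} (I J : ι → Fin m) (hf : ContDiffAt ℝ ∞ f X) (l : List ι) :
    ContDiffAt ℝ ∞ (l.foldr (fun a g => matPd (I a) (J a) g) f) X := by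
  induction l with
  | nil => exact hf
  | cons a l ih => exact contDiffAt_matPd ih _ _

/-- The minor of the matrix of partial derivatives with rows `I` and columns `J`, applied to `f`:
the operator `det (∂/∂X_{I a, J b})`, expanded over permutations so that it is `detDeriv` for
`I = J = id`. -/
def minorDeriv (I J : Fin k → Fin m) (f : (Fin m → Fin m → ℝ) → ℂ) : (Fin m → Fin m → ℝ) → ℂ :=
  fun X => ∑ σ : Perm (Fin k), ((Perm.sign σ : ℤ) : ℂ) *
    (List.finRange k).foldr (fun a g => matPd (I a) (J (σ a)) g) f X

lemma minorDeriv_succ (I J : Fin (k + 1) → Fin m) (hf : ContDiffAt ℝ ∞ f X) :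
    minorDeriv I J f X = ∑ p, ((Perm.sign (swap 0 p) : ℤ) : ℂ) *
      matPd (I 0) (J p) (minorDeriv (I ∘ Fin.succ) (J ∘ swap 0 p ∘ Fin.succ) f) X := by
  have h := sum_sign_mul_perm_succ fun p q => matPd (I 0) (J p)
    ((List.finRange k).foldr (fun a g => matPd (I a.succ) (J (q a)) g) f) X
  simp only [minorDeriv, List.finRange_succ, List.foldr_cons, List.foldr_map]
  refine h.trans (Finset.sum_congr rfl fun p _ => congr_arg _ ?_)
  exact (matPd_sum_mul (fun τ _ => (contDiffAt_foldr_matPd (fun a : Fin k => I a.succ)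
    (fun a => J (swap 0 p (τ a).succ)) hf _).differentiableAt (by simp)) _ _).symm

end MinorDeriv

section Cayley

variable {m k : ℕ} {X : Fin m → Fin m → ℝ}

lemma contDiffAt_det_inv_transpose_submatrix {N : WithTop ℕ∞} (hX : (of X).det ≠ 0)
    (I J : Fin k → Fin m) :
    ContDiffAt ℝ N (fun Y : Fin m → Fin m → ℝ => ((of Y)⁻¹ᵀ.submatrix I J).det) X :=
  contDiff_det.contDiffAt.comp X
    (contDiffAt_pi.2 fun a => contDiffAt_pi.2 fun b => contDiffAt_inv_apply hX (J b) (I a))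

lemma fderiv_det_inv_transpose_submatrix_single (hX : (of X).det ≠ 0) (I J : Fin k → Fin m)
    (i j : Fin m) :
    fderiv ℝ (fun Y : Fin m → Fin m → ℝ => ((of Y)⁻¹ᵀ.submatrix I J).det) X
        (Pi.single i (Pi.single j 1)) =
      -∑ b, (of X)⁻¹ᵀ (I b) j *
        (((of X)⁻¹ᵀ.submatrix I J).updateRow b fun c => (of X)⁻¹ᵀ i (J c)).det := by
  have hinv a b : fderiv ℝ (fun Y : Fin m → Fin m → ℝ => (of Y)⁻¹ a b) X
      (Pi.single i (Pi.single j 1)) = -((of X)⁻¹ j b * (of X)⁻¹ a i) := by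
    have hsingle : of (Pi.single i (Pi.single j 1)) = single i j (1 : ℝ) :=
      (single_eq_of_single_single i j 1).symm
    rw [fderiv_inv_apply hX, hsingle, Matrix.mul_apply]
    simp [mul_single_eq_updateCol_zero, updateCol_apply, mul_comm]
  refine (fderiv_det_apply (fun a b => (contDiffAt_inv_apply hX (J b) (I a)).differentiableAt
    one_ne_zero) _).trans ?_
  rw [← Finset.sum_neg_distrib]
  refine Finset.sum_congr rfl fun b _ => ?_
  rw [← neg_mul, ← det_updateRow_smul]
  congr 2
  ext c
  simpa using hinv (J c) (I b)

variable (ε : Bool) (s : ℂ)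

lemma contDiffAt_sPow_det {N : WithTop ℕ∞} (hX : (of X).det ≠ 0) :
    ContDiffAt ℝ N (fun Y : Fin m → Fin m → ℝ => sPow ε s (of Y).det) X :=
  (contDiffAt_sPow ε s hX).comp X contDiff_det.contDiffAt

lemma matPd_sPow_det (hX : (of X).det ≠ 0) (i j : Fin m) :
    matPd i j (fun Y => sPow ε s (of Y).det) X = s * sPow ε s (of X).det * ((of X)⁻¹ᵀ i j : ℝ) := by
  have hdet := (contDiff_det (𝕜 := ℝ) (n := Fin m)).differentiable one_ne_zero X
  have h := (hasDerivAt_sPow ε s hX).hasFDerivAt.comp X hdet.hasFDerivAt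
  refine (DFunLike.congr_fun h.fderiv _).trans ?_
  have hadj : (of X).adjugate j i = (of X).det * (of X)⁻¹ᵀ i j := by
    rw [transpose_apply, Matrix.inv_def, Matrix.smul_apply, Ring.inverse_eq_inv', smul_eq_mul,
      mul_inv_cancel_left₀ hX]
  rw [ContinuousLinearMap.comp_apply, fderiv_det_single, hadj, ← mul_sPow_not_sub_one ε s hX]
  simp only [transpose_apply, ContinuousLinearMap.toSpanSingleton_apply, Complex.real_smul,
    Complex.ofReal_mul]
  ring

lemma differentiableAt_sPow_det_mul_minor (hX : (of X).det ≠ 0) (I J : Fin k → Fin m) :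
    DifferentiableAt ℝ (fun Y : Fin m → Fin m → ℝ =>
      sPow ε s (of Y).det * (((of Y)⁻¹ᵀ.submatrix I J).det : ℝ)) X :=
  ((contDiffAt_sPow_det ε s hX).differentiableAt one_ne_zero).mul (differentiableAt_ofReal_comp
    ((contDiffAt_det_inv_transpose_submatrix hX I J).differentiableAt one_ne_zero))

lemma matPd_sPow_det_mul_minor (hX : (of X).det ≠ 0) (I J : Fin k → Fin m) (i j : Fin m) :
    matPd i j (fun Y => sPow ε s (of Y).det * (((of Y)⁻¹ᵀ.submatrix I J).det : ℝ)) X =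
      sPow ε s (of X).det * (s * ((of X)⁻¹ᵀ i j : ℝ) * (((of X)⁻¹ᵀ.submatrix I J).det : ℝ) -
        (∑ b, (of X)⁻¹ᵀ (I b) j *
          (((of X)⁻¹ᵀ.submatrix I J).updateRow b fun c => (of X)⁻¹ᵀ i (J c)).det : ℝ)) := by
  have hminor := (contDiffAt_det_inv_transpose_submatrix hX I J).differentiableAt one_ne_zero
  rw [matPd_mul ((contDiffAt_sPow_det ε s hX).differentiableAt one_ne_zero)
    (differentiableAt_ofReal_comp hminor), matPd_ofReal_comp hminor,
    fderiv_det_inv_transpose_submatrix_single hX, matPd_sPow_det ε s hX]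
  push_cast
  ring

theorem minorDeriv_sPow_det (hX : (of X).det ≠ 0) (I J : Fin k → Fin m) :
    minorDeriv I J (fun Y => sPow ε s (of Y).det) X =
      (∏ l : Fin k, (s + (l : ℕ))) *
        (sPow ε s (of X).det * (((of X)⁻¹ᵀ.submatrix I J).det : ℝ)) := by
  induction k generalizing X with
  | zero => simp [minorDeriv]
  | succ k ih =>
    let C : Matrix (Fin (k + 1)) (Fin (k + 1)) ℝ := (of X)⁻¹ᵀ.submatrix I J
    let minor p := C.submatrix Fin.succ (swap 0 p ∘ Fin.succ)
    have hpartial (p : Fin (k + 1)) :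
        matPd (I 0) (J p) (minorDeriv (I ∘ Fin.succ) (J ∘ swap 0 p ∘ Fin.succ)
            fun Y => sPow ε s (of Y).det) X =
          (∏ l : Fin k, (s + (l : ℕ))) * (sPow ε s (of X).det *
            (s * (C 0 p : ℝ) * ((minor p).det : ℝ) - (∑ b : Fin k, C b.succ p *
              ((minor p).updateRow b fun c => C 0 (swap 0 p c.succ)).det : ℝ))) := by
      rw [matPd_congr ((eventually_det_ne_zero hX).mono fun _ hY => ih hY _ _),
        matPd_const_mul (differentiableAt_sPow_det_mul_minor ε s hX _ _),
        matPd_sPow_det_mul_minor ε s hX]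
      rfl
    calc minorDeriv I J (fun Y => sPow ε s (of Y).det) X
      _ = (∏ l : Fin k, (s + (l : ℕ))) * (sPow ε s (of X).det *
            ∑ p, ((Perm.sign (swap 0 p) : ℤ) : ℂ) *
              (s * (C 0 p : ℝ) * ((minor p).det : ℝ) - (∑ b : Fin k, C b.succ p *
                ((minor p).updateRow b fun c => C 0 (swap 0 p c.succ)).det : ℝ))) := by
        rw [minorDeriv_succ I J (contDiffAt_sPow_det ε s hX)]
        simp only [hpartial, mul_left_comm ((Perm.sign _ : ℤ) : ℂ), ← Finset.mul_sum]
      _ = (∏ l : Fin k, (s + (l : ℕ))) * (sPow ε s (of X).det * ((s + k) * (C.det : ℝ))) :=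
        congr_arg (fun z => _ * (_ * z))
          (sum_swap_mul_sub_sum_det_updateRow Complex.ofRealHom s C)
      _ = (∏ l : Fin (k + 1), (s + (l : ℕ))) * (sPow ε s (of X).det * (C.det : ℝ)) := by
        simp only [Fin.prod_univ_castSucc, Fin.val_castSucc, Fin.val_last]
        ring

end Cayley

/-- Bernstein identity (signed Cayley identity) for `V = Mat(m,ℝ)`:
`det(∂)[(det X)^{s,ε}] = s(s+1)⋯(s+m−1)·(det X)^{s−1,−ε}` on `{det X ≠ 0}`. -/
theorem bernstein_identity_matrix (m : ℕ) (hm : 1 ≤ m) (s : ℂ) (ε : Bool)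
    (X : Fin m → Fin m → ℝ) (hX : (Matrix.of X).det ≠ 0) :
    detDeriv (fun Y => sPow ε s ((Matrix.of Y).det)) X
      = (∏ k : Fin m, (s + (k : ℕ))) * sPow (!ε) (s - 1) ((Matrix.of X).det) := by
  have hX' : ((of X).det : ℂ) ≠ 0 := Complex.ofReal_ne_zero.2 hX
  calc detDeriv (fun Y => sPow ε s (of Y).det) X
    _ = minorDeriv id id (fun Y => sPow ε s (of Y).det) X := rfl
    _ = (∏ k : Fin m, (s + (k : ℕ))) * (sPow ε s (of X).det * ((of X)⁻¹.det : ℝ)) := by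
      rw [minorDeriv_sPow_det ε s hX, submatrix_id_id, det_transpose]
    _ = (∏ k : Fin m, (s + (k : ℕ))) * sPow (!ε) (s - 1) (of X).det := by
      rw [det_nonsing_inv, Ring.inverse_eq_inv', Complex.ofReal_inv, ← mul_sPow_not_sub_one ε s hX]
      field_simp
end
end

section
/- Hua's formula for the quadratic form of signature (p,q) (the inversion case of the covariance identity det(g(x)−g(y)) = a(g,x)⁻¹ det(x−y) a(g,y)⁻¹, for V = ℝ^{p,q}): for all x, y ∈ ℝⁿ with P(x) ≠ 0 and P(y) ≠ 0, setting x̌ := (x₁, −x₂, …, −xₙ) and x⁻¹ := P(x)⁻¹ · x̌ (and similarly for y), one has P( −x⁻¹ + y⁻¹ ) = P(x)⁻¹ · P(x − y) · P(y)⁻¹. -/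
/-!
For any quadratic form `Q`, expanding by the polar form gives
`Q (Q(y)⁻¹ y - Q(x)⁻¹ x) = Q(y)⁻¹ + Q(x)⁻¹ - Q(x)⁻¹ Q(y)⁻¹ polar Q x y`,
which is `Q (x - y)` divided by `Q(x) Q(y)`. The map `x ↦ x̌` is linear and preserves `P`, so it can
be pulled out of `-x⁻¹ + y⁻¹`, leaving this identity for `P`.
-/

noncomputable section

/-- `εᵢ`: the sign of the `i`-th coordinate for the quadratic form of signature `(p,q)`. -/
def sgn (p : ℕ) {n : ℕ} (i : Fin n) : ℝ := if (i : ℕ) < p then 1 else -1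

/-- The quadratic form `P(x) = x₁²+⋯+x_p² − x_{p+1}²−⋯−x_n²` on `ℝⁿ`, `n = p+q`. -/
def Pform (p : ℕ) {n : ℕ} (x : Fin n → ℝ) : ℝ := ∑ i, sgn p i * x i ^ 2

/-- The associated symmetric bilinear form `P(x,y) = Σ_{i≤p} xᵢyᵢ − Σ_{i>p} xᵢyᵢ`. -/
def Pbil (p : ℕ) {n : ℕ} (x y : Fin n → ℝ) : ℝ := ∑ i, sgn p i * x i * y i

/-- `x̌ = (x₁, −x₂, …, −xₙ)`. -/
def checkVec {n : ℕ} (x : Fin n → ℝ) : Fin n → ℝ :=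
  fun i => if (i : ℕ) = 0 then x i else -x i

/-- The Jordan inverse `x⁻¹ = P(x)⁻¹ · x̌` in `ℝ^{p,q}`. -/
def jInv (p : ℕ) {n : ℕ} (x : Fin n → ℝ) : Fin n → ℝ :=
  (Pform p x)⁻¹ • checkVec x

open QuadraticMap in
theorem quadraticMap_sub {R M N : Type*} [CommRing R] [AddCommGroup M] [AddCommGroup N]
    [Module R M] [Module R N] (Q : QuadraticMap R M N) (x y : M) :
    Q (x - y) = Q x + Q y - polar Q x y := by
  rw [sub_eq_add_neg, QuadraticMap.map_add Q, QuadraticMap.map_neg, polar_neg_right,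
    ← sub_eq_add_neg]

section QuadraticForm

variable {K M M' : Type*} [Field K] [AddCommGroup M] [Module K M] [AddCommGroup M'] [Module K M']

open QuadraticMap in
theorem quadraticForm_inv_smul_sub_inv_smul (Q : QuadraticForm K M) {x y : M}
    (hx : Q x ≠ 0) (hy : Q y ≠ 0) :
    Q ((Q y)⁻¹ • y - (Q x)⁻¹ • x) = (Q x)⁻¹ * Q (x - y) * (Q y)⁻¹ := by
  calc
    Q ((Q y)⁻¹ • y - (Q x)⁻¹ • x)
        = (Q y)⁻¹ * (Q y)⁻¹ * Q y + (Q x)⁻¹ * (Q x)⁻¹ * Q x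
            - (Q y)⁻¹ * ((Q x)⁻¹ * polar Q x y) := by
      rw [quadraticMap_sub, QuadraticMap.map_smul, QuadraticMap.map_smul, polar_smul_left,
        polar_smul_right, polar_comm Q y x]
      simp only [smul_eq_mul]
    _ = (Q x)⁻¹ * (Q x + Q y - polar Q x y) * (Q y)⁻¹ := by
      field_simp
    _ = (Q x)⁻¹ * Q (x - y) * (Q y)⁻¹ := by rw [quadraticMap_sub]

theorem hua_formula_Rpq_general {Q : QuadraticForm K M} {Q' : QuadraticForm K M'}
    (σ : Q →qᵢ Q') {x y : M} (hx : Q x ≠ 0) (hy : Q y ≠ 0) :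
    Q' (-((Q x)⁻¹ • σ x) + (Q y)⁻¹ • σ y) = (Q x)⁻¹ * Q (x - y) * (Q y)⁻¹ := by
  rw [neg_add_eq_sub, ← map_smul, ← map_smul, ← map_sub, σ.map_app,
    quadraticForm_inv_smul_sub_inv_smul Q hx hy]

end QuadraticForm

/-- The conjugation `x ↦ x̌` as a linear isometry of a diagonal form `∑ wᵢ xᵢ²`; the weights are
arbitrary because `x̌` only changes signs of coordinates. -/
def checkIsometry {n : ℕ} (w : Fin n → ℝ) :
    QuadraticMap.weightedSumSquares ℝ w →qᵢ QuadraticMap.weightedSumSquares ℝ w where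
  toFun := checkVec
  map_add' x y := by
    funext i
    simp only [checkVec, Pi.add_apply, neg_add, ite_add_ite]
  map_smul' c x := by
    funext i
    simp only [checkVec, Pi.smul_apply, smul_eq_mul, mul_ite, mul_neg, RingHom.id_apply]
  map_app' x := by
    have check_mul_self (i : Fin n) : checkVec x i * checkVec x i = x i * x i := by
      unfold checkVec
      split_ifs
      · rfl
      · exact neg_mul_neg _ _
    simp only [QuadraticMap.weightedSumSquares_apply, check_mul_self]

theorem Pform_eq_weightedSumSquares (p : ℕ) {n : ℕ} (x : Fin n → ℝ) :
    Pform p x = QuadraticMap.weightedSumSquares ℝ (sgn p) x := by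
  simp only [Pform, QuadraticMap.weightedSumSquares_apply, smul_eq_mul, sq]

/-- Hua's formula for the quadratic form of signature `(p,q)`:
`P(−x⁻¹ + y⁻¹) = P(x)⁻¹ · P(x−y) · P(y)⁻¹` for invertible `x, y`. -/
theorem hua_formula_Rpq (p q : ℕ) (hp : 1 ≤ p) (n : ℕ) (hn : n = p + q)
    (x y : Fin n → ℝ) (hx : Pform p x ≠ 0) (hy : Pform p y ≠ 0) :
    Pform p (-jInv p x + jInv p y) = (Pform p x)⁻¹ * Pform p (x - y) * (Pform p y)⁻¹ := by
  simp only [jInv, Pform_eq_weightedSumSquares] at hx hy ⊢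
  exact hua_formula_Rpq_general (checkIsometry (sgn p)) hx hy
end
end

section
/- Stabilizer lemma for the conformal group of ℝ^{p,q} (Lemma 8.7): Let g : W → W be a linear bijection with Q(g w) = Q(w) for all w ∈ W, and let e_{n+1} = (0, 0, 1) ∈ W. Then g maps the line ℝ·e_{n+1} into itself (i.e. g(e_{n+1}) is a nonzero scalar multiple of e_{n+1}) if and only if there exist t ∈ ℝ∖{0}, a linear map h : ℝⁿ → ℝⁿ with P(h v) = P(v) for all v, and a ∈ ℝⁿ, such that g = l_{t,h} ∘ n_a, where n_a(α, v, β) := (α, αa + v, αP(a) + 2P(a,v) + β) and l_{t,h}(α, v, β) := (t⁻¹α, h v, tβ). -/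
noncomputable section

/-- The quadratic form `Q(α, v, β) = P(v) − αβ` on `W = ℝ × ℝⁿ × ℝ`. -/
def Qform (p : ℕ) {n : ℕ} (w : ℝ × (Fin n → ℝ) × ℝ) : ℝ :=
  Pform p w.2.1 - w.1 * w.2.2

/-- `n_a(α, v, β) = (α, αa + v, αP(a) + 2P(a,v) + β)`. -/
def transMap (p : ℕ) {n : ℕ} (a : Fin n → ℝ) (w : ℝ × (Fin n → ℝ) × ℝ) :
    ℝ × (Fin n → ℝ) × ℝ :=
  (w.1, w.1 • a + w.2.1, w.1 * Pform p a + 2 * Pbil p a w.2.1 + w.2.2)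

/-- `l_{t,h}(α, v, β) = (t⁻¹α, hv, tβ)`. -/
def levMap {n : ℕ} (t : ℝ) (h : (Fin n → ℝ) →ₗ[ℝ] (Fin n → ℝ))
    (w : ℝ × (Fin n → ℝ) × ℝ) : ℝ × (Fin n → ℝ) × ℝ :=
  (t⁻¹ * w.1, h w.2.1, t * w.2.2)

/-!
Let `Q(α, v, β) = P v - α * β` and let `g` preserve `Q` and scale `e = (0, 0, 1)` by a unit `c`. The
first coordinate of `w` is `-polar Q w e`, so `g` scales it by `c⁻¹`; hence `g` preserves `e^⊥`,
which is `α = 0`, and acts on `e^⊥ / ⟨e⟩` by a surjective isometry `h` of `P`. Choosing `a` so that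
`h a` is the middle coordinate of `g (1, 0, 0)`, the maps `g` and `l_{c,h} ∘ n_a` agree in the first
two coordinates. Both preserve `Q`, which determines `β` from `α` and `v` as soon as `α` is a unit,
so they agree on the affine hyperplane `α = 1`, and a linear map is determined by its values
there.
-/

open QuadraticMap (linMulLin polar polar_add_right polar_smul_left polar_smul_right
  weightedSumSquares weightedSumSquares_apply)

section CommRing

variable {R M : Type*} [CommRing R] [AddCommGroup M] [Module R M]

theorem linearMap_ext_of_fst_eq_one {N : Type*} [AddCommGroup N] [Module R N]
    {f g : R × M →ₗ[R] N} (hfg : ∀ m, f (1, m) = g (1, m)) : f = g := by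
  refine LinearMap.prod_ext (LinearMap.ext_ring (hfg 0)) (LinearMap.ext fun m => ?_)
  have hm : ((0, m) : R × M) = (1, m) - (1, 0) := by simp
  simp only [LinearMap.comp_apply, LinearMap.inr_apply, hm, map_sub, hfg]

/-- The orthogonal sum of a quadratic form `P` on `M` and a hyperbolic plane, realized on
`R × M × R` as `(α, v, β) ↦ P v - α * β`; it is the form preserved by the conformal group of `P`. -/
def conformalForm (P : QuadraticForm R M) : QuadraticForm R (R × M × R) :=
  P.comp (LinearMap.fst R M R ∘ₗ LinearMap.snd R R (M × R)) -
    linMulLin (LinearMap.fst R R (M × R)) (LinearMap.snd R M R ∘ₗ LinearMap.snd R R (M × R))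

/-- The unipotent map `n_a` of `R × M × R`, which lifts the translation by `a` on `M`. The term
`2 P(a, v)` of the classical formula is written `polar P a v`, which also makes sense when `2` is
not invertible. -/
def conformalTranslation (P : QuadraticForm R M) (a : M) : R × M × R →ₗ[R] R × M × R where
  toFun w := (w.1, w.1 • a + w.2.1, w.1 * P a + polar P a w.2.1 + w.2.2)
  map_add' w w' := by
    ext
    · rfl
    · simp only [Prod.fst_add, Prod.snd_add, add_smul]
      abel
    · simp only [Prod.fst_add, Prod.snd_add, polar_add_right]
      ring
  map_smul' r w := by
    ext
    · rfl
    · simp [mul_smul]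
    · simp only [Prod.smul_fst, Prod.smul_snd, polar_smul_right, smul_eq_mul, RingHom.id_apply]
      ring

/-- The block diagonal map `l_{t,h} = diag(t⁻¹, h, t)` of `R × M × R`, an element of the Levi factor
of the stabilizer of the line through `(0, 0, 1)` when `h` is an isometry. -/
def conformalLevi (t : Rˣ) (h : M →ₗ[R] M) : R × M × R →ₗ[R] R × M × R :=
  ((↑t⁻¹ : R) • LinearMap.id).prodMap (h.prodMap ((t : R) • LinearMap.id))

/-- The component `M → M` of a linear map of `R × M × R` in block form. -/
def middleBlock (g : R × M × R →ₗ[R] R × M × R) : M →ₗ[R] M :=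
  LinearMap.fst R M R ∘ₗ LinearMap.snd R R (M × R) ∘ₗ g ∘ₗ
    LinearMap.inr R R (M × R) ∘ₗ LinearMap.inl R M R

theorem middleBlock_apply (g : R × M × R →ₗ[R] R × M × R) (v : M) :
    middleBlock g v = (g (0, v, 0)).2.1 :=
  rfl

theorem conformalLevi_apply (t : Rˣ) (h : M →ₗ[R] M) (w : R × M × R) :
    conformalLevi t h w = (↑t⁻¹ * w.1, h w.2.1, t * w.2.2) :=
  rfl

variable (P : QuadraticForm R M)

theorem conformalTranslation_apply (a : M) (w : R × M × R) :
    conformalTranslation P a w =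
      (w.1, w.1 • a + w.2.1, w.1 * P a + polar P a w.2.1 + w.2.2) :=
  rfl

theorem conformalForm_apply (w : R × M × R) : conformalForm P w = P w.2.1 - w.1 * w.2.2 :=
  rfl

theorem polar_conformalForm_zero_zero_one (w : R × M × R) :
    polar (conformalForm P) w (0, 0, 1) = -w.1 := by
  simp only [polar, conformalForm_apply, Prod.fst_add, Prod.snd_add, add_zero, map_zero, zero_mul]
  ring

theorem conformalForm_conformalTranslation (a : M) (w : R × M × R) :
    conformalForm P (conformalTranslation P a w) = conformalForm P w := by
  simp only [conformalForm_apply, conformalTranslation_apply, QuadraticMap.map_add P,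
    QuadraticMap.map_smul, polar_smul_left, smul_eq_mul]
  ring

theorem conformalLevi_conformalTranslation_zero_zero_one (t : Rˣ) (h : M →ₗ[R] M) (a : M) :
    conformalLevi t h (conformalTranslation P a (0, 0, 1)) = (t : R) • (0, 0, 1) := by
  simp [conformalLevi_apply, conformalTranslation_apply]

variable {P}

theorem conformalForm_conformalLevi (t : Rˣ) {h : M →ₗ[R] M} (hP : ∀ v, P (h v) = P v)
    (w : R × M × R) : conformalForm P (conformalLevi t h w) = conformalForm P w := by
  simp only [conformalForm_apply, conformalLevi_apply, hP]
  rw [mul_mul_mul_comm, Units.inv_mul, one_mul]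

theorem eq_of_conformalForm_eq {w w' : R × M × R} (hunit : IsUnit w.1) (hfst : w.1 = w'.1)
    (hmid : w.2.1 = w'.2.1) (hQ : conformalForm P w = conformalForm P w') : w = w' := by
  rw [conformalForm_apply, conformalForm_apply, ← hfst, ← hmid, sub_right_inj] at hQ
  exact Prod.ext hfst (Prod.ext hmid (hunit.mul_left_cancel hQ))

variable {g : R × M × R →ₗ[R] R × M × R}

section Stabilizer

variable {c : Rˣ}

theorem fst_apply_of_map_eq_smul (hQ : ∀ w, conformalForm P (g w) = conformalForm P w)
    (hg : g (0, 0, 1) = (c : R) • (0, 0, 1)) (w : R × M × R) : (g w).1 = ↑c⁻¹ * w.1 := by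
  rw [Units.eq_inv_mul_iff_mul_eq, ← neg_inj]
  calc -(c * (g w).1)
      = polar (conformalForm P) (g w) (g (0, 0, 1)) := by
        rw [hg, polar_smul_right, polar_conformalForm_zero_zero_one, smul_eq_mul, mul_neg]
    _ = polar (conformalForm P) w (0, 0, 1) := by simp only [polar, ← map_add, hQ]
    _ = -w.1 := polar_conformalForm_zero_zero_one P w

theorem snd_fst_apply_of_map_eq_smul {c : R} (hg : g (0, 0, 1) = c • (0, 0, 1)) (w : R × M × R) :
    (g w).2.1 = w.1 • (g (1, 0, 0)).2.1 + middleBlock g w.2.1 := by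
  have hw : w = w.1 • (1, 0, 0) + (0, w.2.1, 0) + w.2.2 • (0, 0, 1) := by simp
  calc (g w).2.1
      = (w.1 • g (1, 0, 0) + g (0, w.2.1, 0) + w.2.2 • c • (0, 0, 1)).2.1 := by
        rw [← hg, ← map_smul, ← map_smul, ← map_add, ← map_add, ← hw]
    _ = w.1 • (g (1, 0, 0)).2.1 + middleBlock g w.2.1 := by simp [middleBlock_apply]

theorem apply_middleBlock_of_map_eq_smul (hQ : ∀ w, conformalForm P (g w) = conformalForm P w)
    (hg : g (0, 0, 1) = (c : R) • (0, 0, 1)) (v : M) : P (middleBlock g v) = P v := by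
  simpa [conformalForm_apply, middleBlock_apply, fst_apply_of_map_eq_smul hQ hg]
    using hQ (0, v, 0)

theorem middleBlock_surjective_of_map_eq_smul (hsurj : Function.Surjective g)
    (hQ : ∀ w, conformalForm P (g w) = conformalForm P w)
    (hg : g (0, 0, 1) = (c : R) • (0, 0, 1)) : Function.Surjective (middleBlock g) := by
  intro b
  obtain ⟨w, hw⟩ := hsurj (0, b, 0)
  have hw_fst : w.1 = 0 := by
    have hfst := fst_apply_of_map_eq_smul hQ hg w
    rwa [hw, eq_comm, Units.mul_right_eq_zero] at hfst
  have hmid := snd_fst_apply_of_map_eq_smul hg w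
  rw [hw, hw_fst, zero_smul, zero_add] at hmid
  exact ⟨w.2.1, hmid.symm⟩

theorem exists_eq_conformalLevi_comp_conformalTranslation (hsurj : Function.Surjective g)
    (hQ : ∀ w, conformalForm P (g w) = conformalForm P w)
    (hg : g (0, 0, 1) = (c : R) • (0, 0, 1)) :
    ∃ a, g = conformalLevi c (middleBlock g) ∘ₗ conformalTranslation P a := by
  obtain ⟨a, ha⟩ := middleBlock_surjective_of_map_eq_smul hsurj hQ hg (g (1, 0, 0)).2.1
  have hP := apply_middleBlock_of_map_eq_smul hQ hg
  have hfst := fst_apply_of_map_eq_smul hQ hg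
  refine ⟨a, linearMap_ext_of_fst_eq_one fun m => eq_of_conformalForm_eq (P := P) ?_ ?_ ?_ ?_⟩
  · simp [hfst]
  · exact hfst (1, m)
  · rw [snd_fst_apply_of_map_eq_smul hg]
    simp [conformalLevi_apply, conformalTranslation_apply, ha]
  · rw [LinearMap.comp_apply, conformalForm_conformalLevi c hP,
      conformalForm_conformalTranslation, hQ]

end Stabilizer

end CommRing

section Signature

variable (p : ℕ) {n : ℕ}

/-- The quadratic form `Pform p` on `ℝⁿ`, bundled as a `QuadraticForm`. -/
def signatureForm (n : ℕ) : QuadraticForm ℝ (Fin n → ℝ) :=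
  weightedSumSquares ℝ (sgn p)

theorem signatureForm_apply (x : Fin n → ℝ) : signatureForm p n x = Pform p x := by
  simp only [signatureForm, weightedSumSquares_apply, Pform, smul_eq_mul, sq]

theorem polar_signatureForm (x y : Fin n → ℝ) : polar (signatureForm p n) x y = 2 * Pbil p x y := by
  simp only [polar, signatureForm_apply, Pform, Pbil, Finset.mul_sum, ← Finset.sum_sub_distrib]
  refine Finset.sum_congr rfl fun i _ => ?_
  rw [Pi.add_apply]
  ring

theorem conformalForm_signatureForm (w : ℝ × (Fin n → ℝ) × ℝ) :
    conformalForm (signatureForm p n) w = Qform p w := by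
  rw [conformalForm_apply, signatureForm_apply, Qform]

theorem conformalTranslation_signatureForm (a : Fin n → ℝ) (w : ℝ × (Fin n → ℝ) × ℝ) :
    conformalTranslation (signatureForm p n) a w = transMap p a w := by
  rw [conformalTranslation_apply, signatureForm_apply, polar_signatureForm, transMap]

theorem conformalLevi_eq_levMap (t : ℝˣ) (h : (Fin n → ℝ) →ₗ[ℝ] (Fin n → ℝ))
    (w : ℝ × (Fin n → ℝ) × ℝ) : conformalLevi t h w = levMap t h w := by
  rw [conformalLevi_apply, levMap, Units.val_inv_eq_inv_val]

end Signature

theorem stabilizer_lemma_Rpq_general {R M : Type*} [CommRing R] [AddCommGroup M] [Module R M]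
    (P : QuadraticForm R M) (g : R × M × R →ₗ[R] R × M × R) (hsurj : Function.Surjective g)
    (hQ : ∀ w, conformalForm P (g w) = conformalForm P w) :
    (∃ c : Rˣ, g (0, 0, 1) = (c : R) • (0, 0, 1)) ↔
      ∃ t : Rˣ, ∃ h : M →ₗ[R] M, (∀ v, P (h v) = P v) ∧
        ∃ a : M, ∀ w, g w = conformalLevi t h (conformalTranslation P a w) := by
  constructor
  · rintro ⟨c, hg⟩
    obtain ⟨a, hga⟩ := exists_eq_conformalLevi_comp_conformalTranslation hsurj hQ hg
    exact ⟨c, middleBlock g, apply_middleBlock_of_map_eq_smul hQ hg, a, LinearMap.congr_fun hga⟩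
  · rintro ⟨t, h, -, a, hg⟩
    exact ⟨t, (hg _).trans (conformalLevi_conformalTranslation_zero_zero_one P t h a)⟩

/-- Stabilizer lemma for the conformal group of `ℝ^{p,q}` (Lemma 8.7): a linear bijection
`g` of `W` preserving `Q` maps the line `ℝ·e_{n+1}` into itself iff `g = l_{t,h} ∘ n_a`
for some `t ≠ 0`, some linear `h` with `P∘h = P`, and some `a ∈ ℝⁿ`. -/
theorem stabilizer_lemma_Rpq (p q : ℕ) (hp : 1 ≤ p) (n : ℕ) (hn : n = p + q)
    (g : (ℝ × (Fin n → ℝ) × ℝ) →ₗ[ℝ] (ℝ × (Fin n → ℝ) × ℝ))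
    (hbij : Function.Bijective g)
    (hQ : ∀ w, Qform p (g w) = Qform p w) :
    (∃ c : ℝ, c ≠ 0 ∧ g ((0 : ℝ), (0 : Fin n → ℝ), (1 : ℝ))
        = c • ((0 : ℝ), (0 : Fin n → ℝ), (1 : ℝ)))
    ↔ ∃ t : ℝ, t ≠ 0 ∧ ∃ h : (Fin n → ℝ) →ₗ[ℝ] (Fin n → ℝ),
        (∀ v, Pform p (h v) = Pform p v) ∧
        ∃ a : Fin n → ℝ, ∀ w, g w = levMap t h (transMap p a w) := by
  simpa only [signatureForm_apply, conformalTranslation_signatureForm, conformalLevi_eq_levMap,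
    ← Units.exists_iff_ne_zero] using stabilizer_lemma_Rpq_general (signatureForm p n) g hbij.2
      (by simpa only [conformalForm_signatureForm] using hQ)
end
end
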